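/- Fix θ > 0 and define the symplectic pairing σ(x,y) = (2/θ)·(x₁y₂ − x₂y₁ + x₃y₄ − x₄y₃) for x, y ∈ ℝ⁴. Let p be even, q be odd, 1 ≤ p < q, and let y₁, …, y_q, E ∈ ℝ⁴ satisfy the contracted-line constraint y_p − y_{p+1} + y_{p+2} − ⋯ − y_q = E (i.e. Σ_{k=p}^{q} (−1)^{k−p} y_k = E). Define z ∈ (ℝ⁴)^{q−1} by z_i = y_i for 1 ≤ i ≤ p−1 and z_i = y_{i+1} for p ≤ i ≤ q−1. Then Σ_{1≤i<j≤p} (−1)^{i+j+1} σ(y_i, y_j) + Σ_{p≤i<j≤q} (−1)^{i+j+1} σ(y_i, y_j) = Σ_{1≤i<j≤q−1} (−1)^{i+j+1} σ(z_i, z_j) + σ( E , Σ_{j=p+1}^{q} (−1)^{j+1} y_j − Σ_{i=1}^{p−1} (−1)^{i+1} y_i ). -/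

import Mathlib

open Finset

/-- The symplectic pairing `x·θ⁻¹·y` on `ℝ⁴`. -/
noncomputable def symplecticPairing (θ : ℝ) (x y : EuclideanSpace ℝ (Fin 4)) : ℝ :=
  (2 / θ) * (x 0 * y 1 - x 1 * y 0 + x 2 * y 3 - x 3 * y 2)

/-!
Cut each alternating phase at the contracted line. The pairs straddling a cut contribute, up to
sign, the pairing of the alternating sums of the two sides. Removing `y p` lowers the later indices
by one: this keeps the sign of every pair, but reverses the sign of the alternating sum of the later
fields. Only pairings among `y p` and the two outer alternating sums are left, and antisymmetry
rearranges them into the linear term.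
-/

theorem sum_Icc_consecutive {M : Type*} [AddCommMonoid M] (f : ℕ → M) {a m b : ℕ}
    (ham : a ≤ m + 1) (hmb : m ≤ b) :
    ∑ i ∈ Icc a m, f i + ∑ i ∈ Icc (m + 1) b, f i = ∑ i ∈ Icc a b, f i := by
  simp only [← Ico_add_one_right_eq_Icc]
  exact sum_Ico_consecutive f ham (by omega)

theorem sum_Icc_comp_add_one {M : Type*} [AddCommMonoid M] (f : ℕ → M) (a b : ℕ) :
    ∑ i ∈ Icc a b, f (i + 1) = ∑ i ∈ Icc (a + 1) (b + 1), f i := by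
  simp only [← Ico_add_one_right_eq_Icc]
  exact sum_Ico_add' f a (b + 1) 1

section AlternatingPhase

variable {R M N : Type*} [CommRing R] [AddCommGroup M] [AddCommGroup N] [Module R M] [Module R N]

variable (R) in
/-- The alternating sum `∑ (-1)^(i+1) y i` of the fields `y a, …, y b`, which the delta function of
a vertex ties to the short variables. -/
def alternatingSum (y : ℕ → M) (a b : ℕ) : M :=
  ∑ i ∈ Icc a b, (-1 : R) ^ (i + 1) • y i

/-- The phase of a generalized Moyal vertex with fields `y a, …, y b`, for a pairing `B`. The sign
of a pair is read off the labels `i`, `j` themselves, so the vertex need not start at label `1`. -/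
def moyalPhase (B : M →ₗ[R] M →ₗ[R] N) (y : ℕ → M) (a b : ℕ) : N :=
  ∑ i ∈ Icc a b, ∑ j ∈ Icc (i + 1) b, (-1 : R) ^ (i + j + 1) • B (y i) (y j)

theorem alternatingSum_congr {y z : ℕ → M} {a b : ℕ} (h : ∀ i, a ≤ i → i ≤ b → y i = z i) :
    alternatingSum R y a b = alternatingSum R z a b := by
  refine sum_congr rfl fun i hi => ?_
  rw [h i (mem_Icc.mp hi).1 (mem_Icc.mp hi).2]

theorem alternatingSum_add (y : ℕ → M) {a m b : ℕ} (ham : a ≤ m + 1) (hmb : m ≤ b) :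
    alternatingSum R y a m + alternatingSum R y (m + 1) b = alternatingSum R y a b :=
  sum_Icc_consecutive _ ham hmb

theorem alternatingSum_comp_add_one (y : ℕ → M) (a b : ℕ) :
    alternatingSum R (fun i => y (i + 1)) a b = -alternatingSum R y (a + 1) (b + 1) := by
  simp only [alternatingSum, ← sum_Icc_comp_add_one, ← sum_neg_distrib, pow_succ _ (_ + 1),
    mul_neg_one, neg_smul, neg_neg]

theorem sum_neg_one_pow_sub_smul (y : ℕ → M) (p q : ℕ) :
    ∑ k ∈ Icc p q, (-1 : R) ^ (k - p) • y k = (-1 : R) ^ (p + 1) • alternatingSum R y p q := by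
  rw [alternatingSum, smul_sum]
  refine sum_congr rfl fun k hk => ?_
  obtain ⟨d, rfl⟩ := Nat.exists_eq_add_of_le (mem_Icc.mp hk).1
  have hsign : (-1 : R) ^ (p + 1) * (-1) ^ (p + d + 1) = (-1) ^ d := by
    rw [← pow_add, show p + 1 + (p + d + 1) = 2 * (p + 1) + d by ring, pow_add,
      (even_two_mul _).neg_one_pow, one_mul]
  rw [smul_smul, hsign, Nat.add_sub_cancel_left]

variable (B : M →ₗ[R] M →ₗ[R] N)

theorem moyalPhase_self (y : ℕ → M) (a : ℕ) : moyalPhase B y a a = 0 := by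
  simp [moyalPhase]

theorem moyalPhase_congr {y z : ℕ → M} {a b : ℕ} (h : ∀ i, a ≤ i → i ≤ b → y i = z i) :
    moyalPhase B y a b = moyalPhase B z a b := by
  refine sum_congr rfl fun i hi => sum_congr rfl fun j hj => ?_
  rw [mem_Icc] at hi hj
  rw [h i hi.1 hi.2, h j (by omega) hj.2]

theorem moyalPhase_comp_add_one (y : ℕ → M) (a b : ℕ) :
    moyalPhase B (fun i => y (i + 1)) a b = moyalPhase B y (a + 1) (b + 1) := by
  have hsign (i j : ℕ) : (-1 : R) ^ (i + 1 + (j + 1) + 1) = (-1) ^ (i + j + 1) := by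
    ring
  simp only [moyalPhase, ← sum_Icc_comp_add_one, hsign]

theorem apply_alternatingSum_alternatingSum (y : ℕ → M) (a b c d : ℕ) :
    B (alternatingSum R y a b) (alternatingSum R y c d) =
      -∑ i ∈ Icc a b, ∑ j ∈ Icc c d, (-1 : R) ^ (i + j + 1) • B (y i) (y j) := by
  have hsign (i j : ℕ) : (-1 : R) ^ (i + j + 1) = -((-1) ^ (j + 1) * (-1) ^ (i + 1)) := by
    ring
  rw [alternatingSum, LinearMap.map_sum₂]
  simp only [alternatingSum, map_sum, map_smul, LinearMap.smul_apply, smul_smul, hsign, neg_smul,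
    sum_neg_distrib, neg_neg]

theorem moyalPhase_split (y : ℕ → M) {a m b : ℕ} (ham : a ≤ m + 1) (hmb : m ≤ b) :
    moyalPhase B y a b = moyalPhase B y a m + moyalPhase B y (m + 1) b
      - B (alternatingSum R y a m) (alternatingSum R y (m + 1) b) := by
  have hleft : ∑ i ∈ Icc a m, ∑ j ∈ Icc (i + 1) b, (-1 : R) ^ (i + j + 1) • B (y i) (y j) =
      moyalPhase B y a m - B (alternatingSum R y a m) (alternatingSum R y (m + 1) b) := by
    rw [moyalPhase, apply_alternatingSum_alternatingSum, sub_neg_eq_add, ← sum_add_distrib]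
    refine sum_congr rfl fun i hi => ?_
    exact (sum_Icc_consecutive _ (Nat.succ_le_succ (mem_Icc.mp hi).2) hmb).symm
  rw [moyalPhase, ← sum_Icc_consecutive _ ham hmb, hleft, ← moyalPhase, sub_add_eq_add_sub]

variable {B}

theorem first_filk_move_general (hB : B.IsAlt) {p q : ℕ} (hp : 1 ≤ p) (hpq : p ≤ q)
    {y z : ℕ → M} {E : M} (hz : ∀ i, z i = if i ≤ p - 1 then y i else y (i + 1))
    (hE : ∑ k ∈ Icc p q, (-1 : R) ^ (k - p) • y k = E) :
    moyalPhase B y 1 p + moyalPhase B y p q = moyalPhase B z 1 (q - 1)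
      + B ((-1 : R) ^ p • E) (alternatingSum R y (p + 1) q - alternatingSum R y 1 (p - 1)) := by
  obtain ⟨m, rfl⟩ := Nat.exists_eq_add_of_le' hp
  obtain ⟨r, rfl⟩ := Nat.exists_eq_add_of_le' (hp.trans hpq)
  simp only [Nat.add_sub_cancel] at hz ⊢
  have hz_left (i : ℕ) (_ : 1 ≤ i) (hi : i ≤ m) : z i = y i := by rw [hz, if_pos hi]
  have hz_right (i : ℕ) (hi : m + 1 ≤ i) (_ : i ≤ r) : z i = y (i + 1) := by
    rw [hz, if_neg (by omega)]
  have hE_split : (-1 : R) ^ (m + 1) • E =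
      -(alternatingSum R y (m + 1) (m + 1) + alternatingSum R y (m + 1 + 1) (r + 1)) := by
    rw [alternatingSum_add y (by omega) hpq, ← hE, sum_neg_one_pow_sub_smul, smul_smul, ← pow_add,
      odd_add_self_one'.neg_one_pow, neg_one_smul]
  have hfirst : moyalPhase B y 1 (m + 1) = moyalPhase B y 1 m
      - B (alternatingSum R y 1 m) (alternatingSum R y (m + 1) (m + 1)) := by
    rw [moyalPhase_split B y (m := m) (by omega) (by omega), moyalPhase_self, add_zero]
  have hsecond : moyalPhase B y (m + 1) (r + 1) = moyalPhase B y (m + 1 + 1) (r + 1)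
      - B (alternatingSum R y (m + 1) (m + 1)) (alternatingSum R y (m + 1 + 1) (r + 1)) := by
    rw [moyalPhase_split B y (by omega) hpq, moyalPhase_self, zero_add]
  have hmerged : moyalPhase B z 1 r = moyalPhase B y 1 m + moyalPhase B y (m + 1 + 1) (r + 1)
      + B (alternatingSum R y 1 m) (alternatingSum R y (m + 1 + 1) (r + 1)) := by
    rw [moyalPhase_split B z (m := m) (by omega) (by omega), moyalPhase_congr B hz_left,
      moyalPhase_congr B hz_right, moyalPhase_comp_add_one, alternatingSum_congr hz_left,
      alternatingSum_congr hz_right, alternatingSum_comp_add_one, map_neg, sub_neg_eq_add]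
  rw [hfirst, hsecond, hmerged, hE_split]
  simp only [map_add, map_sub, map_neg, LinearMap.add_apply, LinearMap.neg_apply,
    hB.self_eq_zero, ← hB.neg _ (alternatingSum R y 1 m)]
  abel

end AlternatingPhase

/-- The symplectic pairing bundled as a bilinear form. Its values unfold to `symplecticPairing θ`,
so a `moyalPhase` of it is definitionally a double sum of such pairings. -/
noncomputable def symplecticForm (θ : ℝ) : LinearMap.BilinForm ℝ (EuclideanSpace ℝ (Fin 4)) :=
  LinearMap.mk₂ ℝ (symplecticPairing θ)
    (fun _ _ _ => by simp only [symplecticPairing, PiLp.add_apply]; ring)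
    (fun _ _ _ => by simp only [symplecticPairing, PiLp.smul_apply, smul_eq_mul]; ring)
    (fun _ _ _ => by simp only [symplecticPairing, PiLp.add_apply]; ring)
    (fun _ _ _ => by simp only [symplecticPairing, PiLp.smul_apply, smul_eq_mul]; ring)

theorem symplecticForm_isAlt (θ : ℝ) : (symplecticForm θ).IsAlt := fun x => by
  simp only [symplecticForm, LinearMap.mk₂_apply, symplecticPairing]
  ring

/-- One step of the first Filk move: contracting a tree line between a generalized
vertex with `p` fields and one with `q - p + 1` fields reproduces the alternating
Moyal phase on the reindexed variables, up to a term linear in the short-variable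
combination `E`. -/
theorem first_filk_move (θ : ℝ) (hθ : 0 < θ) (p q : ℕ)
    (hp : Even p) (hq : Odd q) (hp1 : 1 ≤ p) (hpq : p < q)
    (y : ℕ → EuclideanSpace ℝ (Fin 4)) (E : EuclideanSpace ℝ (Fin 4))
    (z : ℕ → EuclideanSpace ℝ (Fin 4))
    (hz : ∀ i, z i = if i ≤ p - 1 then y i else y (i + 1))
    (hcon : ∑ k ∈ Finset.Icc p q, ((-1 : ℝ) ^ (k - p)) • y k = E) :
    (∑ i ∈ Finset.Icc 1 p, ∑ j ∈ Finset.Icc (i + 1) p,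
        (-1 : ℝ) ^ (i + j + 1) * symplecticPairing θ (y i) (y j))
      + (∑ i ∈ Finset.Icc p q, ∑ j ∈ Finset.Icc (i + 1) q,
        (-1 : ℝ) ^ (i + j + 1) * symplecticPairing θ (y i) (y j))
    = (∑ i ∈ Finset.Icc 1 (q - 1), ∑ j ∈ Finset.Icc (i + 1) (q - 1),
        (-1 : ℝ) ^ (i + j + 1) * symplecticPairing θ (z i) (z j))
      + symplecticPairing θ E
          ((∑ j ∈ Finset.Icc (p + 1) q, ((-1 : ℝ) ^ (j + 1)) • y j)
            - ∑ i ∈ Finset.Icc 1 (p - 1), ((-1 : ℝ) ^ (i + 1)) • y i) := by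
  have hmove := first_filk_move_general (symplecticForm_isAlt θ) hp1 hpq.le hz hcon
  rwa [hp.neg_one_pow, one_smul] at hmove
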